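/- Let R be a commutative ring, E an R-module, A = End_R(E), and let I₁ ⊆ I₂ be right ideals of A which are direct summands of A as right A-modules. Then I ↦ Φ(I) is an inclusion-preserving bijection, with inverse N ↦ Ψ(N), from the set of right ideals I of A that are direct summands of A as right A-modules and satisfy I₁ ⊆ I ⊆ I₂, onto the set of R-submodules N of E that are direct summands of E and satisfy Φ(I₁) ⊆ N ⊆ Φ(I₂). -/

import Mathlib

/-- `Ψ(N) = {f ∈ End_R(E) : range f ⊆ N}`, as an `R`-submodule of `End_R(E)`. -/
def psi {R E : Type*} [CommRing R] [AddCommGroup E] [Module R E]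
    (N : Submodule R E) : Submodule R (Module.End R E) where
  carrier := {f | LinearMap.range f ≤ N}
  add_mem' := by
    intro f g hf hg x hx
    obtain ⟨y, rfl⟩ := LinearMap.mem_range.mp hx
    show f y + g y ∈ N
    exact N.add_mem (hf (LinearMap.mem_range_self f y)) (hg (LinearMap.mem_range_self g y))
  zero_mem' := by
    intro x hx
    obtain ⟨y, rfl⟩ := LinearMap.mem_range.mp hx
    exact N.zero_mem
  smul_mem' := by
    intro c f hf x hx
    obtain ⟨y, rfl⟩ := LinearMap.mem_range.mp hx
    show c • f y ∈ N
    exact N.smul_mem c (hf (LinearMap.mem_range_self f y))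

/-- `Φ(I)`: the `R`-submodule of `E` generated by the union of the ranges of all `f ∈ I`. -/
def phi {R E : Type*} [CommRing R] [AddCommGroup E] [Module R E]
    (I : Submodule R (Module.End R E)) : Submodule R E :=
  Submodule.span R (⋃ f ∈ I, (LinearMap.range f : Set E))

/-- A right ideal of `End_R(E)`: an `R`-submodule closed under composition on the right. -/
def IsRightIdeal {R E : Type*} [CommRing R] [AddCommGroup E] [Module R E]
    (I : Submodule R (Module.End R E)) : Prop :=
  ∀ f ∈ I, ∀ g : Module.End R E, f * g ∈ I

/-- A submodule `N` of a module `M` is a direct summand. -/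
def IsSummand {R M : Type*} [CommRing R] [AddCommGroup M] [Module R M]
    (N : Submodule R M) : Prop :=
  ∃ N' : Submodule R M, N ⊓ N' = ⊥ ∧ N ⊔ N' = ⊤

/-- A right ideal `I` of `End_R(E)` is a direct summand of `End_R(E)` as a right module
over itself: there is a right ideal `J` with `I ∩ J = 0` and `I + J = End_R(E)`. -/
def IsIdealSummand {R E : Type*} [CommRing R] [AddCommGroup E] [Module R E]
    (I : Submodule R (Module.End R E)) : Prop :=
  ∃ J : Submodule R (Module.End R E), IsRightIdeal J ∧ I ⊓ J = ⊥ ∧ I ⊔ J = ⊤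

/-!
Both sides of the correspondence are parametrized by the idempotents `e` of `A = End_R(E)`: the
direct summands of `E` are the `e(E)`, and the direct-summand right ideals of `A` are the
`eA = Ψ(e(E))`, where `e` is the component of `1` in the ideal. Since `Φ(eA) = e(E)`, the Galois
connection between `Φ` and `Ψ` restricts to mutually inverse bijections.
-/

section

variable {R E : Type*} [CommRing R] [AddCommGroup E] [Module R E]
  {I J : Submodule R (Module.End R E)} {N N' : Submodule R E} {e f g : Module.End R E}

theorem gc_phi_psi : GaloisConnection (phi (R := R) (E := E)) psi := fun I N => by
  simp only [phi, Submodule.span_le, Set.iUnion_subset_iff]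
  rfl

theorem range_le_phi (hf : f ∈ I) : LinearMap.range f ≤ phi I :=
  gc_phi_psi.le_u_l I hf

theorem psi_bot : psi (⊥ : Submodule R E) = ⊥ :=
  (Submodule.eq_bot_iff _).2 fun f hf => f.range_le_bot_iff.1 hf

theorem isRightIdeal_psi (N : Submodule R E) : IsRightIdeal (psi N) :=
  fun f hf g => (LinearMap.range_comp_le_range g f).trans hf

theorem mem_psi_range_iff (he : IsIdempotentElem e) :
    f ∈ psi (LinearMap.range e) ↔ e * f = f :=
  (LinearMap.IsIdempotentElem.comp_eq_right_iff he f).symm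

theorem isSummand_iff_exists_isCompl : IsSummand N ↔ ∃ N', IsCompl N N' := by
  simp only [IsSummand, isCompl_iff, disjoint_iff, codisjoint_iff]

theorem isIdealSummand_iff_exists_isCompl :
    IsIdealSummand I ↔ ∃ J, IsRightIdeal J ∧ IsCompl I J := by
  simp only [IsIdealSummand, isCompl_iff, disjoint_iff, codisjoint_iff]

theorem isSummand_iff_exists_range_eq :
    IsSummand N ↔ ∃ e : Module.End R E, IsIdempotentElem e ∧ LinearMap.range e = N := by
  rw [isSummand_iff_exists_isCompl]
  constructor
  · rintro ⟨N', h⟩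
    exact ⟨N.projection N' h, Submodule.isIdempotentElem_projection h,
      Submodule.range_projection h⟩
  · rintro ⟨e, he, rfl⟩
    exact ⟨LinearMap.ker e, LinearMap.IsIdempotentElem.isCompl he⟩

theorem IsSummand.phi_psi (hN : IsSummand N) : phi (psi N) = N := by
  obtain ⟨e, he, rfl⟩ := isSummand_iff_exists_range_eq.1 hN
  exact (gc_phi_psi.l_u_le _).antisymm (range_le_phi ((mem_psi_range_iff he).2 he))

theorem isCompl_psi (h : IsCompl N N') : IsCompl (psi N) (psi N') := by
  constructor
  · rw [disjoint_iff, ← gc_phi_psi.u_inf, h.inf_eq_bot, psi_bot]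
  · refine Submodule.codisjoint_iff_exists_add_eq.2 fun f =>
      ⟨N.projection N' h * f, N'.projection N h.symm * f, ?_, ?_, ?_⟩
    · exact isRightIdeal_psi N _ (Submodule.range_projection h).le f
    · exact isRightIdeal_psi N' _ (Submodule.range_projection h.symm).le f
    · ext x
      exact Submodule.projection_add_projection_eq_self h (f x)

theorem IsSummand.isIdealSummand_psi (hN : IsSummand N) : IsIdealSummand (psi N) := by
  obtain ⟨N', h⟩ := isSummand_iff_exists_isCompl.1 hN
  exact isIdealSummand_iff_exists_isCompl.2 ⟨psi N', isRightIdeal_psi N', isCompl_psi h⟩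

theorem mul_eq_self_of_add_eq_one (hI : IsRightIdeal I) (hJ : IsRightIdeal J)
    (hIJ : Disjoint I J) (he : e ∈ I) (hf : f ∈ J) (hef : e + f = 1) (hg : g ∈ I) :
    e * g = g := by
  have decomp : e * g + f * g = g := by rw [← add_mul, hef, one_mul]
  have hfgI : f * g ∈ I := by
    rw [eq_sub_of_add_eq' decomp]
    exact I.sub_mem hg (hI e he g)
  have hfg : f * g = 0 := Submodule.disjoint_def.1 hIJ _ hfgI (hJ f hf g)
  rwa [hfg, add_zero] at decomp

theorem IsIdealSummand.exists_psi_range_eq (hs : IsIdealSummand I) (hI : IsRightIdeal I) :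
    ∃ e : Module.End R E, IsIdempotentElem e ∧ psi (LinearMap.range e) = I := by
  obtain ⟨J, hJ, hIJ⟩ := isIdealSummand_iff_exists_isCompl.1 hs
  obtain ⟨e, f, heI, hfJ, hef⟩ :=
    Submodule.codisjoint_iff_exists_add_eq.1 hIJ.codisjoint (1 : Module.End R E)
  have left_id : ∀ g ∈ I, e * g = g := fun g hg =>
    mul_eq_self_of_add_eq_one hI hJ hIJ.disjoint heI hfJ hef hg
  have he : IsIdempotentElem e := left_id e heI
  refine ⟨e, he, le_antisymm (fun g hg => ?_) fun g hg => ?_⟩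
  · rw [← (mem_psi_range_iff he).1 hg]
    exact hI e heI g
  · exact (mem_psi_range_iff he).2 (left_id g hg)

theorem IsIdealSummand.exists_isSummand_psi_eq (hs : IsIdealSummand I) (hI : IsRightIdeal I) :
    ∃ N, IsSummand N ∧ psi N = I := by
  obtain ⟨e, he, heI⟩ := hs.exists_psi_range_eq hI
  exact ⟨LinearMap.range e, isSummand_iff_exists_range_eq.2 ⟨e, he, rfl⟩, heI⟩

theorem IsIdealSummand.isSummand_phi (hs : IsIdealSummand I) (hI : IsRightIdeal I) :
    IsSummand (phi I) := by
  obtain ⟨N, hN, rfl⟩ := hs.exists_isSummand_psi_eq hI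
  rwa [hN.phi_psi]

theorem IsIdealSummand.psi_phi (hs : IsIdealSummand I) (hI : IsRightIdeal I) :
    psi (phi I) = I := by
  obtain ⟨N, hN, rfl⟩ := hs.exists_isSummand_psi_eq hI
  rw [hN.phi_psi]

end

theorem phi_bijection_general {R E : Type*} [CommRing R] [AddCommGroup E] [Module R E]
    (I₁ I₂ : Submodule R (Module.End R E)) (h₂ : psi (phi I₂) = I₂) :
    (∀ I : Submodule R (Module.End R E),
        IsRightIdeal I → IsIdealSummand I → I₁ ≤ I → I ≤ I₂ →
        IsSummand (phi I) ∧ phi I₁ ≤ phi I ∧ phi I ≤ phi I₂) ∧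
    (∀ N : Submodule R E, IsSummand N → phi I₁ ≤ N → N ≤ phi I₂ →
        IsRightIdeal (psi N) ∧ IsIdealSummand (psi N) ∧ I₁ ≤ psi N ∧ psi N ≤ I₂) ∧
    (∀ I : Submodule R (Module.End R E),
        IsRightIdeal I → IsIdealSummand I → I₁ ≤ I → I ≤ I₂ → psi (phi I) = I) ∧
    (∀ N : Submodule R E, IsSummand N → phi I₁ ≤ N → N ≤ phi I₂ → phi (psi N) = N) ∧
    (∀ I I' : Submodule R (Module.End R E),
        IsRightIdeal I → IsIdealSummand I → I₁ ≤ I → I ≤ I₂ →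
        IsRightIdeal I' → IsIdealSummand I' → I₁ ≤ I' → I' ≤ I₂ →
        (I ≤ I' ↔ phi I ≤ phi I')) := by
  refine ⟨?mapsTo_phi, ?mapsTo_psi, ?left_inv, ?right_inv, ?le_iff⟩
  case mapsTo_phi =>
    intro I hI hs hl hu
    exact ⟨hs.isSummand_phi hI, gc_phi_psi.monotone_l hl, gc_phi_psi.monotone_l hu⟩
  case mapsTo_psi =>
    intro N hN hl hu
    have psi_le : psi N ≤ I₂ := (gc_phi_psi.monotone_u hu).trans_eq h₂
    exact ⟨isRightIdeal_psi N, hN.isIdealSummand_psi, gc_phi_psi.le_u hl, psi_le⟩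
  case left_inv => exact fun I hI hs _ _ => hs.psi_phi hI
  case right_inv => exact fun N hN _ _ => hN.phi_psi
  case le_iff =>
    intro I I' _ _ _ _ hI' hs' _ _
    rw [gc_phi_psi.le_iff_le, hs'.psi_phi hI']

/-- For right ideals `I₁ ⊆ I₂` of `A = End_R(E)` which are direct summands of `A` as right
`A`-modules, `I ↦ Φ(I)` is an inclusion-preserving bijection, with inverse `N ↦ Ψ(N)`, from
the set of right ideals `I` of `A` that are direct summands of `A` as right `A`-modules with
`I₁ ⊆ I ⊆ I₂`, onto the set of submodules `N` of `E` that are direct summands of `E` with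
`Φ(I₁) ⊆ N ⊆ Φ(I₂)`. -/
theorem phi_bijection {R E : Type*} [CommRing R] [AddCommGroup E] [Module R E]
    (I₁ I₂ : Submodule R (Module.End R E))
    (h₁ : IsRightIdeal I₁) (h₂ : IsRightIdeal I₂)
    (hs₁ : IsIdealSummand I₁) (hs₂ : IsIdealSummand I₂) (h₁₂ : I₁ ≤ I₂) :
    (∀ I : Submodule R (Module.End R E),
        IsRightIdeal I → IsIdealSummand I → I₁ ≤ I → I ≤ I₂ →
        IsSummand (phi I) ∧ phi I₁ ≤ phi I ∧ phi I ≤ phi I₂) ∧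
    (∀ N : Submodule R E, IsSummand N → phi I₁ ≤ N → N ≤ phi I₂ →
        IsRightIdeal (psi N) ∧ IsIdealSummand (psi N) ∧ I₁ ≤ psi N ∧ psi N ≤ I₂) ∧
    (∀ I : Submodule R (Module.End R E),
        IsRightIdeal I → IsIdealSummand I → I₁ ≤ I → I ≤ I₂ → psi (phi I) = I) ∧
    (∀ N : Submodule R E, IsSummand N → phi I₁ ≤ N → N ≤ phi I₂ → phi (psi N) = N) ∧
    (∀ I I' : Submodule R (Module.End R E),
        IsRightIdeal I → IsIdealSummand I → I₁ ≤ I → I ≤ I₂ →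
        IsRightIdeal I' → IsIdealSummand I' → I₁ ≤ I' → I' ≤ I₂ →
        (I ≤ I' ↔ phi I ≤ phi I')) :=
  phi_bijection_general I₁ I₂ (hs₂.psi_phi h₂)
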